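/- arXiv:1111.2273 — 2 statements merged into one kernel-verified Lean document; each statement's English description precedes it below -/
import Mathlib

section
/- Let ‖·‖ be an equivalent norm on c₀ satisfying ‖x‖ ≤ ‖x‖_∞ ≤ (3/2)‖x‖ for all x ∈ c₀. Then (c₀, ‖·‖) admits an infinite equilateral set; in fact there exists an infinite set S ⊆ c₀ with ‖x − y‖ = 1 for all distinct x, y ∈ S. -/
open scoped ZeroAtInfty

/-- `N` is a norm on the real vector space `X`. -/
def IsNorm {X : Type*} [AddCommGroup X] [Module ℝ X] (N : X → ℝ) : Prop :=
  (∀ x, N x = 0 ↔ x = 0) ∧ (∀ (a : ℝ) (x : X), N (a • x) = |a| * N x) ∧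
    ∀ x y, N (x + y) ≤ N x + N y

/-!
Points `x₀, x₁, …` at mutual distance `1` are chosen one after another, with `xₙ` of the form
`(t₀, …, tₙ₋₁, -1, 0, 0, …)` and every `tᵢ ∈ [0, 1/2]`. Given `x₀, …, xₙ₋₁`, one has to solve
`N (xₙ - xᵢ) = 1` for all `i < n`. The `i`-th coordinate of `xₙ - xᵢ` is `1 + tᵢ` and its other
coordinates are small, so the comparison with the sup norm gives `N (xₙ - xᵢ) ≤ 1` at `tᵢ = 0` and
`N (xₙ - xᵢ) ≥ 1` at `tᵢ = 1/2`. Hence there is a largest `tᵢ` with `N (xₙ - xᵢ) ≤ 1`, the other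
coordinates being fixed. By convexity of the unit ball this `tᵢ` is a nonexpansive function of
`t`, and a nonexpansive self-map of the cube `[0, 1/2]ⁿ` has a fixed point, which solves the system.
-/

open Set Function Filter Topology

section FixedPoint

variable {E : Type*} [NormedAddCommGroup E] [NormedSpace ℝ E] {K : Set E} {z : E} {G : E → E}

theorem exists_lineMap_eq_of_lipschitzOnWith_one (hK : IsComplete K) (hz : z ∈ K)
    (hstar : StarConvex ℝ z K) (hmaps : MapsTo G K K) (hG : LipschitzOnWith 1 G K)
    {δ : ℝ} (hδ : δ ∈ Ioc 0 1) : ∃ x ∈ K, AffineMap.lineMap (G x) z δ = x := by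
  have hmaps' : MapsTo (fun x ↦ AffineMap.lineMap (G x) z δ) K K := fun x hx ↦ by
    simp only [← AffineMap.lineMap_apply_one_sub z (G x), AffineMap.lineMap_apply_module',
      add_comm _ z]
    exact hstar.add_smul_sub_mem (hmaps hx) (sub_nonneg.2 hδ.2) (by linarith [hδ.1])
  have hlip : LipschitzOnWith (1 - δ).toNNReal (fun x ↦ AffineMap.lineMap (G x) z δ) K := by
    refine LipschitzOnWith.of_dist_le_mul fun x hx y hy ↦ ?_
    rw [Real.coe_toNNReal _ (sub_nonneg.2 hδ.2), AffineMap.lineMap_apply_module,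
      AffineMap.lineMap_apply_module, dist_add_right, dist_smul₀,
      Real.norm_of_nonneg (sub_nonneg.2 hδ.2)]
    gcongr
    · exact sub_nonneg.2 hδ.2
    · simpa using hG.dist_le_mul x hx y hy
  have hcontr : ContractingWith (1 - δ).toNNReal (hmaps'.restrict _ K K) :=
    ⟨Real.toNNReal_lt_one.2 (by linarith [hδ.1]), hlip.mapsToRestrict hmaps'⟩
  obtain ⟨x, hx, hfix, -⟩ := hcontr.exists_fixedPoint' hK hmaps' hz (edist_ne_top _ _)
  exact ⟨x, hx, hfix⟩

theorem exists_isFixedPt_of_lipschitzOnWith_one (hK : IsCompact K) (hz : z ∈ K)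
    (hstar : StarConvex ℝ z K) (hmaps : MapsTo G K K) (hG : LipschitzOnWith 1 G K) :
    ∃ x ∈ K, IsFixedPt G x := by
  obtain ⟨x, hx, hmin⟩ := hK.exists_isMinOn ⟨z, hz⟩
    (show ContinuousOn (fun x ↦ dist (G x) x) K from
      continuous_dist.comp_continuousOn (hG.continuousOn.prodMk continuousOn_id))
  refine ⟨x, hx, dist_le_zero.1 ?_⟩
  have hsmall : ∀ δ ∈ Ioc (0 : ℝ) 1, dist (G x) x ≤ δ * Metric.diam K := fun δ hδ ↦ by
    obtain ⟨y, hy, hfix⟩ :=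
      exists_lineMap_eq_of_lipschitzOnWith_one hK.isComplete hz hstar hmaps hG hδ
    calc dist (G x) x ≤ dist (G y) y := hmin hy
      _ = dist (G y) (AffineMap.lineMap (G y) z δ) := by rw [hfix]
      _ = δ * dist (G y) z := by rw [dist_left_lineMap, Real.norm_of_nonneg hδ.1.le]
      _ ≤ δ * Metric.diam K :=
        mul_le_mul_of_nonneg_left (Metric.dist_le_diam_of_mem hK.isBounded (hmaps hy) hz) hδ.1.le
  have hlim : Tendsto (fun δ : ℝ ↦ δ * Metric.diam K) (𝓝[>] 0) (𝓝 0) :=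
    tendsto_nhdsWithin_of_tendsto_nhds (Continuous.tendsto' (by fun_prop) _ _ (zero_mul _))
  exact ge_of_tendsto hlim (eventually_of_mem (Ioc_mem_nhdsGT one_pos) hsmall)

end FixedPoint

section LastSublevel

variable {α β : Type*}

/-- The largest point of `[a, b]` at which `g` is at most `c`. Applied in each coordinate
direction, it gives the self-map of a box whose fixed points solve the system of equations in
`exists_mem_Icc_forall_eq`. It is defined as a supremum, so its value is only meaningful
when `g` is at most `c` somewhere on `[a, b]`. -/
noncomputable def lastSublevel [ConditionallyCompleteLattice α] [LE β] (g : α → β) (a b : α)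
    (c : β) : α :=
  sSup {t ∈ Icc a b | g t ≤ c}

theorem le_lastSublevel [ConditionallyCompleteLattice α] [LE β] {g : α → β} {a b t : α} {c : β}
    (ht : t ∈ Icc a b) (hgt : g t ≤ c) : t ≤ lastSublevel g a b c :=
  le_csSup ⟨b, fun _ hs ↦ hs.1.2⟩ ⟨ht, hgt⟩

variable [ConditionallyCompleteLinearOrder α] [TopologicalSpace α] [OrderTopology α]
  [LinearOrder β] [TopologicalSpace β] [OrderClosedTopology β] {g : α → β} {a b : α} {c : β}

theorem lastSublevel_mem (hg : ContinuousOn g (Icc a b)) (hab : a ≤ b) (ha : g a ≤ c) :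
    lastSublevel g a b c ∈ {t ∈ Icc a b | g t ≤ c} :=
  (isCompact_Icc.of_isClosed_subset (hg.preimage_isClosed_of_isClosed isClosed_Icc isClosed_Iic)
    inter_subset_left).sSup_mem ⟨a, left_mem_Icc.2 hab, ha⟩

theorem apply_lastSublevel_eq [DenselyOrdered α] (hg : ContinuousOn g (Icc a b)) (hab : a ≤ b)
    (ha : g a ≤ c) (hb : c ≤ g b) : g (lastSublevel g a b c) = c := by
  obtain ⟨hmem, hle⟩ := lastSublevel_mem hg hab ha
  obtain ⟨t, ht, hgt⟩ := intermediate_value_Icc hmem.2 (hg.mono (Icc_subset_Icc_left hmem.1))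
    ⟨hle, hb⟩
  have htle : t ≤ lastSublevel g a b c := le_lastSublevel (Icc_subset_Icc_left hmem.1 ht) hgt.le
  rw [ht.1.antisymm htle, hgt]

end LastSublevel

section Box

variable {ι : Type*} {π : ι → Type*} {i : ι}

theorem update_mem_Icc [DecidableEq ι] [∀ j, Preorder (π j)] {a b x : ∀ j, π j} {t : π i}
    (hx : x ∈ Icc a b) (ht : t ∈ Icc (a i) (b i)) : update x i t ∈ Icc a b :=
  ⟨le_update_iff.2 ⟨ht.1, fun j _ ↦ hx.1 j⟩, update_le_iff.2 ⟨ht.2, fun j _ ↦ hx.2 j⟩⟩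

theorem dist_update_update_le [Fintype ι] [DecidableEq ι] [∀ j, PseudoMetricSpace (π j)]
    {x y : ∀ j, π j} {s t : π i} (h : dist s t ≤ dist x y) :
    dist (update x i s) (update y i t) ≤ dist x y := by
  refine (dist_pi_le_iff dist_nonneg).2 fun j ↦ ?_
  obtain rfl | hj := eq_or_ne j i
  · simpa using h
  · simpa [hj] using dist_le_pi_dist x y j

theorem lipschitzOnWith_of_forall_apply {X : Type*} [PseudoEMetricSpace X] [Fintype ι]
    [∀ j, PseudoEMetricSpace (π j)] {C : NNReal} {K : Set X} {G : X → ∀ j, π j}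
    (hG : ∀ j, LipschitzOnWith C (fun x ↦ G x j) K) : LipschitzOnWith C G K :=
  fun _ hx _ hy ↦ edist_pi_le_iff.2 fun j ↦ hG j hx hy

/-- An analogue of the Poincaré–Miranda theorem. The last hypothesis, which makes elementary fixed
point theory sufficient, says that the sublevel set of `f i` is preserved by moves during which
the `i`-th coordinate decreases at least as fast as every other coordinate changes. -/
theorem exists_mem_Icc_forall_eq [Fintype ι] {a b : ι → ℝ} {f : ι → (ι → ℝ) → ℝ} {c : ℝ}
    (hab : a ≤ b)
    (hf : ∀ i, ContinuousOn (f i) (Icc a b))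
    (hfa : ∀ i, ∀ x ∈ Icc a b, x i = a i → f i x ≤ c)
    (hfb : ∀ i, ∀ x ∈ Icc a b, x i = b i → c ≤ f i x)
    (hmono : ∀ i, ∀ x ∈ Icc a b, ∀ y ∈ Icc a b, x i + dist x y ≤ y i → f i y ≤ c → f i x ≤ c) :
    ∃ x ∈ Icc a b, ∀ i, f i x = c := by
  classical
  let G (x : ι → ℝ) (i : ι) : ℝ := lastSublevel (fun t ↦ f i (update x i t)) (a i) (b i) c
  have hcont : ∀ x ∈ Icc a b, ∀ i,
      ContinuousOn (fun t ↦ f i (update x i t)) (Icc (a i) (b i)) := fun x hx i ↦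
    (hf i).comp (by fun_prop) fun _ ↦ update_mem_Icc hx
  have hleft : ∀ x ∈ Icc a b, ∀ i, f i (update x i (a i)) ≤ c := fun x hx i ↦
    hfa i _ (update_mem_Icc hx (left_mem_Icc.2 (hab i))) (by simp)
  have hright : ∀ x ∈ Icc a b, ∀ i, c ≤ f i (update x i (b i)) := fun x hx i ↦
    hfb i _ (update_mem_Icc hx (right_mem_Icc.2 (hab i))) (by simp)
  have hGmem : ∀ x ∈ Icc a b, ∀ i, G x i ∈ Icc (a i) (b i) ∧ f i (update x i (G x i)) ≤ c :=
    fun x hx i ↦ lastSublevel_mem (hcont x hx i) (hab i) (hleft x hx i)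
  have hGle : ∀ y ∈ Icc a b, ∀ x ∈ Icc a b, ∀ i, G y i ≤ G x i + dist y x := by
    intro y hy x hx i
    obtain ⟨hGy, hfy⟩ := hGmem y hy i
    rw [dist_comm y x, ← sub_le_iff_le_add]
    obtain hlt | hle := lt_or_ge (G y i - dist x y) (a i)
    · exact hlt.le.trans (hGmem x hx i).1.1
    · have ht : G y i - dist x y ∈ Icc (a i) (b i) :=
        ⟨hle, (sub_le_self _ dist_nonneg).trans hGy.2⟩
      refine le_lastSublevel ht (hmono i _ (update_mem_Icc hx ht) _ (update_mem_Icc hy hGy) ?_ hfy)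
      rw [update_self, update_self, ← le_sub_iff_add_le', sub_sub_cancel]
      exact dist_update_update_le (by simp)
  obtain ⟨x, hx, hfix⟩ := exists_isFixedPt_of_lipschitzOnWith_one isCompact_Icc
    (left_mem_Icc.2 hab) ((convex_Icc a b).starConvex (left_mem_Icc.2 hab))
    (fun x hx ↦ ⟨fun i ↦ (hGmem x hx i).1.1, fun i ↦ (hGmem x hx i).1.2⟩)
    (lipschitzOnWith_of_forall_apply fun i ↦
      LipschitzOnWith.of_le_add fun y hy x hx ↦ hGle y hy x hx i)
  refine ⟨x, hx, fun i ↦ ?_⟩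
  have hroot := apply_lastSublevel_eq (hcont x hx i) (hab i) (hleft x hx i) (hright x hx i)
  rwa [show lastSublevel _ (a i) (b i) c = x i from congrFun hfix i, update_eq_self] at hroot

end Box

theorem exists_seq_of_forall_fin_exists {α : Type*} {P : ℕ → α → Prop} {r : α → α → Prop}
    (h : ∀ (n : ℕ) (f : Fin n → α), (∀ i : Fin n, P i (f i)) → ∃ y, P n y ∧ ∀ i, r (f i) y) :
    ∃ f : ℕ → α, (∀ n, P n (f n)) ∧ ∀ m n, m < n → r (f m) (f n) := by
  have : Nonempty α := (h 0 Fin.elim0 fun i ↦ i.elim0).nonempty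
  choose! next hP hr using h
  let f : ℕ → α := Nat.strongRec fun n ih ↦ next n fun i ↦ ih i i.2
  have hf : ∀ n, f n = next n fun i ↦ f i := fun n ↦ Nat.strongRec_eq _ n
  have hPf : ∀ n, P n (f n) := fun n ↦ by
    induction n using Nat.strong_induction_on with
    | _ n ih => exact hf n ▸ hP n _ fun i ↦ ih i i.2
  refine ⟨f, hPf, fun m n hmn ↦ ?_⟩
  rw [hf n]
  exact hr n _ (fun i ↦ hPf i) ⟨m, hmn⟩

section Seminorm

variable {E : Type*} [AddCommGroup E] [Module ℝ E]

/-- A norm in the sense of `IsNorm`, as a bundled Mathlib seminorm. -/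
def IsNorm.toSeminorm {N : E → ℝ} (hN : IsNorm N) : Seminorm ℝ E :=
  Seminorm.of N hN.2.2 hN.2.1

theorem seminorm_le_of_add_smul_sub_le (p : Seminorm ℝ E) {u w : E} {s c : ℝ} (hs : 1 ≤ s)
    (hu : p u ≤ c) (hr : p (u + s • (w - u)) ≤ c) : p w ≤ c := by
  have hs₀ : s ≠ 0 := by positivity
  rw [← p.mem_closedBall_zero] at hu hr ⊢
  have hmem := (p.convex_closedBall 0 c).add_smul_sub_mem hu hr
    ⟨inv_nonneg.2 (zero_le_one.trans hs), inv_le_one_of_one_le₀ hs⟩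
  simpa [smul_smul, hs₀] using hmem

theorem range_infinite_and_pairwise_of_seminorm_sub_eq_one {p : Seminorm ℝ E} {x : ℕ → E}
    (hx : ∀ m n, m < n → p (x n - x m) = 1) :
    (range x).Infinite ∧ (range x).Pairwise fun u v ↦ p (u - v) = 1 := by
  have hpair : Pairwise fun m n ↦ p (x m - x n) = 1 := fun m n hmn ↦
    hmn.lt_or_gt.elim (fun h ↦ (map_sub_rev p (x m) (x n)).trans (hx m n h)) (hx n m)
  refine ⟨infinite_range_of_injective fun m n hmn ↦ ?_, ?_⟩
  · by_contra hne
    simpa [hmn] using hpair hne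
  · rintro _ ⟨m, rfl⟩ _ ⟨n, rfl⟩ hne
    exact hpair (ne_of_apply_ne x hne)

end Seminorm

section FinsuppToC0

variable {α : Type*} [TopologicalSpace α] [DiscreteTopology α]

/-- The inclusion of the finitely supported functions on a discrete space `α` into `C₀(α, ℝ)`. Since
Mathlib has no norm on `α →₀ ℝ`, it also serves to express the sup norm `‖x‖_∞` of
`x : α →₀ ℝ`, as `‖finsuppToC0 x‖`. -/
def finsuppToC0 : (α →₀ ℝ) →ₗ[ℝ] C₀(α, ℝ) where
  toFun x :=
    { toFun := x
      continuous_toFun := continuous_of_discreteTopology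
      zero_at_infty' := by
        rw [cocompact_eq_cofinite]
        exact tendsto_nhds_of_eventually_eq x.hasFiniteSupport }
  map_add' _ _ := rfl
  map_smul' _ _ := rfl

theorem norm_finsuppToC0_le {x : α →₀ ℝ} {C : ℝ} (hC : 0 ≤ C) :
    ‖finsuppToC0 x‖ ≤ C ↔ ∀ k, |x k| ≤ C :=
  BoundedContinuousFunction.norm_le (f := (finsuppToC0 x).toBCF) hC

theorem abs_apply_le_norm_finsuppToC0 (x : α →₀ ℝ) (k : α) : |x k| ≤ ‖finsuppToC0 x‖ :=
  (norm_finsuppToC0_le (norm_nonneg _)).1 le_rfl k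

end FinsuppToC0

/-- The vectors `(t₀, …, tₙ₋₁, -1, 0, 0, …)` with all `tₖ ∈ [0, 1/2]`, from which the `n`-th point
of the equilateral set is chosen. -/
structure IsAdmissible (n : ℕ) (w : ℕ →₀ ℝ) : Prop where
  apply_of_lt : ∀ k < n, w k ∈ Icc 0 (1 / 2)
  apply_self : w n = -1
  apply_of_gt : ∀ k, n < k → w k = 0

namespace IsAdmissible

variable {m n : ℕ} {v w w' : ℕ →₀ ℝ}

theorem sub_apply_self (hv : IsAdmissible m v) : (w - v) m = 1 + w m := by
  rw [Finsupp.sub_apply, hv.apply_self]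
  ring

theorem abs_sub_apply_le_half (hv : IsAdmissible m v) (hw : IsAdmissible n w) {k : ℕ}
    (hkn : k < n) (hkm : k ≠ m) : |(w - v) k| ≤ 1 / 2 := by
  have hwk := hw.apply_of_lt k hkn
  have hvk : v k ∈ Icc 0 (1 / 2) := by
    obtain hlt | hgt := hkm.lt_or_gt
    · exact hv.apply_of_lt k hlt
    · simp [hv.apply_of_gt k hgt]
  rw [Finsupp.sub_apply, abs_sub_le_iff]
  constructor <;> linarith [hwk.1, hwk.2, hvk.1, hvk.2]

theorem abs_sub_apply_le_one (hv : IsAdmissible m v) (hw : IsAdmissible n w) (hmn : m < n) {k : ℕ}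
    (hnk : n ≤ k) : |(w - v) k| ≤ 1 := by
  rw [Finsupp.sub_apply, hv.apply_of_gt k (hmn.trans_le hnk)]
  obtain rfl | hlt := hnk.eq_or_lt
  · simp [hw.apply_self]
  · simp [hw.apply_of_gt k hlt]

theorem apply_eq_apply (hw : IsAdmissible n w) (hw' : IsAdmissible n w') {k : ℕ} (hnk : n ≤ k) :
    w k = w' k := by
  obtain rfl | hlt := hnk.eq_or_lt
  · rw [hw.apply_self, hw'.apply_self]
  · rw [hw.apply_of_gt k hlt, hw'.apply_of_gt k hlt]

theorem norm_sub_le_one (hv : IsAdmissible m v) (hw : IsAdmissible n w) (hmn : m < n)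
    (hwm : w m = 0) : ‖finsuppToC0 (w - v)‖ ≤ 1 := by
  refine (norm_finsuppToC0_le zero_le_one).2 fun k ↦ ?_
  obtain hkn | hnk := lt_or_ge k n
  · obtain rfl | hkm := eq_or_ne k m
    · simp [hv.sub_apply_self, hwm]
    · exact (hv.abs_sub_apply_le_half hw hkn hkm).trans (by norm_num)
  · exact hv.abs_sub_apply_le_one hw hmn hnk

theorem one_add_apply_le_norm_sub (hv : IsAdmissible m v) :
    1 + w m ≤ ‖finsuppToC0 (w - v)‖ :=
  hv.sub_apply_self (w := w) ▸ (le_abs_self _).trans (abs_apply_le_norm_finsuppToC0 _ m)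

/-- The scalar is chosen so that the `m`-th coordinate drops from `1 + w m` to exactly `1`. -/
theorem norm_add_smul_sub_le_one (hv : IsAdmissible m v) (hw : IsAdmissible n w)
    (hw' : IsAdmissible n w') (hmn : m < n) (hlt : w' m < w m)
    (hdist : ∀ k < n, |w' k - w k| ≤ w m - w' m) :
    ‖finsuppToC0 ((w - v) + (w m / (w m - w' m)) • (w' - w))‖ ≤ 1 := by
  have hd : 0 < w m - w' m := sub_pos.2 hlt
  obtain ⟨hwm₀, hwm₁⟩ := hw.apply_of_lt m hmn
  refine (norm_finsuppToC0_le zero_le_one).2 fun k ↦ ?_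
  rw [Finsupp.add_apply, Finsupp.smul_apply, Finsupp.sub_apply w' w, smul_eq_mul]
  obtain hkn | hnk := lt_or_ge k n
  · obtain rfl | hkm := eq_or_ne k m
    · have hone : (w - v) k + w k / (w k - w' k) * (w' k - w k) = 1 := by
        rw [hv.sub_apply_self]
        field_simp
        ring
      rw [hone, abs_one]
    · calc |(w - v) k + w m / (w m - w' m) * (w' k - w k)|
          ≤ |(w - v) k| + w m / (w m - w' m) * |w' k - w k| := by
            grw [abs_add_le, abs_mul, abs_of_nonneg (div_nonneg hwm₀ hd.le)]
        _ ≤ 1 / 2 + w m / (w m - w' m) * (w m - w' m) := by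
            gcongr
            exacts [hv.abs_sub_apply_le_half hw hkn hkm, hdist k hkn]
        _ ≤ 1 := by
            rw [div_mul_cancel₀ _ hd.ne']
            linarith
  · rw [hw.apply_eq_apply hw' hnk, sub_self, mul_zero, add_zero]
    exact hv.abs_sub_apply_le_one hw hmn hnk

theorem seminorm_sub_le_one {p : Seminorm ℝ (ℕ →₀ ℝ)} (hp : ∀ x, p x ≤ ‖finsuppToC0 x‖)
    (hv : IsAdmissible m v) (hw : IsAdmissible n w) (hw' : IsAdmissible n w') (hmn : m < n)
    (hdist : ∀ k < n, |w' k - w k| ≤ w m - w' m) (hle : p (w - v) ≤ 1) : p (w' - v) ≤ 1 := by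
  obtain heq | hlt := (sub_nonneg.1 ((abs_nonneg _).trans (hdist m hmn))).eq_or_lt
  · have hww' : w' = w := Finsupp.ext fun k ↦ by
      obtain hkn | hnk := lt_or_ge k n
      · simpa [heq, sub_eq_zero] using hdist k hkn
      · exact hw'.apply_eq_apply hw hnk
    rwa [hww']
  · refine seminorm_le_of_add_smul_sub_le p (s := w m / (w m - w' m)) ?_ hle ?_
    · rw [one_le_div (sub_pos.2 hlt)]
      linarith [(hw'.apply_of_lt m hmn).1]
    · rw [sub_sub_sub_cancel_right]
      exact (hp _).trans (hv.norm_add_smul_sub_le_one hw hw' hmn hlt hdist)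

end IsAdmissible

/-- The vector `(t₀, …, tₙ₋₁, -1, 0, 0, …)`, which parametrises the vectors satisfying
`IsAdmissible n` by the points `t` of the cube `[0, 1/2]ⁿ`. -/
noncomputable def admissibleVec {n : ℕ} (t : Fin n → ℝ) : ℕ →₀ ℝ :=
  Finsupp.embDomain Fin.valEmbedding (Finsupp.equivFunOnFinite.symm t) - Finsupp.single n 1

section AdmissibleVec

variable {n : ℕ} {t : Fin n → ℝ}

theorem admissibleVec_apply_fin (t : Fin n → ℝ) (i : Fin n) : admissibleVec t i = t i := by
  have hemb : Finsupp.embDomain Fin.valEmbedding (Finsupp.equivFunOnFinite.symm t) i = t i :=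
    Finsupp.embDomain_apply_self Fin.valEmbedding _ i
  rw [admissibleVec, Finsupp.sub_apply, hemb, Finsupp.single_eq_of_ne i.2.ne, sub_zero]

theorem admissibleVec_apply_of_le {k : ℕ} (hk : n ≤ k) :
    admissibleVec t k = - Finsupp.single n (1 : ℝ) k := by
  rw [admissibleVec, Finsupp.sub_apply, Finsupp.embDomain_of_notMem_range, zero_sub]
  simpa using hk

theorem isAdmissible_admissibleVec (ht : t ∈ Icc 0 fun _ ↦ 1 / 2) :
    IsAdmissible n (admissibleVec t) where
  apply_of_lt k hk := by
    rw [admissibleVec_apply_fin t ⟨k, hk⟩]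
    exact ⟨ht.1 _, ht.2 _⟩
  apply_self := by simp [admissibleVec_apply_of_le le_rfl]
  apply_of_gt k hk := by simp [admissibleVec_apply_of_le hk.le, hk.ne]

theorem norm_admissibleVec_sub_le (t t' : Fin n → ℝ) :
    ‖finsuppToC0 (admissibleVec t - admissibleVec t')‖ ≤ dist t t' := by
  refine (norm_finsuppToC0_le dist_nonneg).2 fun k ↦ ?_
  rw [Finsupp.sub_apply]
  obtain hkn | hnk := lt_or_ge k n
  · rw [admissibleVec_apply_fin t ⟨k, hkn⟩, admissibleVec_apply_fin t' ⟨k, hkn⟩]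
    exact dist_le_pi_dist t t' _
  · simp [admissibleVec_apply_of_le hnk]

end AdmissibleVec

section Equilateral

variable {p : Seminorm ℝ (ℕ →₀ ℝ)}

theorem continuous_seminorm_admissibleVec_sub (hp : ∀ x, p x ≤ ‖finsuppToC0 x‖) (n : ℕ)
    (v : ℕ →₀ ℝ) : Continuous fun t : Fin n → ℝ ↦ p (admissibleVec t - v) := by
  refine (LipschitzWith.of_le_add fun t t' ↦ ?_).continuous
  calc p (admissibleVec t - v)
      = p ((admissibleVec t' - v) + (admissibleVec t - admissibleVec t')) := by congr 1; abel
    _ ≤ p (admissibleVec t' - v) + dist t t' := (map_add_le_add p _ _).trans <| by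
        grw [hp (admissibleVec t - admissibleVec t'), norm_admissibleVec_sub_le]

theorem exists_isAdmissible_forall_eq_one (hp : ∀ x, p x ≤ ‖finsuppToC0 x‖)
    (hp' : ∀ x, ‖finsuppToC0 x‖ ≤ 3 / 2 * p x) (n : ℕ) (v : Fin n → ℕ →₀ ℝ)
    (hv : ∀ i : Fin n, IsAdmissible i (v i)) :
    ∃ w, IsAdmissible n w ∧ ∀ i, p (w - v i) = 1 := by
  obtain ⟨t, ht, heq⟩ : ∃ t ∈ Icc (0 : Fin n → ℝ) (fun _ ↦ 1 / 2),
      ∀ i, p (admissibleVec t - v i) = 1 := by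
    refine exists_mem_Icc_forall_eq (fun _ ↦ by simp)
      (fun i ↦ (continuous_seminorm_admissibleVec_sub hp n (v i)).continuousOn) ?_ ?_ ?_
    · intro i t ht hti
      exact (hp _).trans <| (hv i).norm_sub_le_one (isAdmissible_admissibleVec ht) i.2 <|
        (admissibleVec_apply_fin t i).trans hti
    · intro i t _ hti
      have hlow := (hv i).one_add_apply_le_norm_sub (w := admissibleVec t)
      rw [admissibleVec_apply_fin, hti] at hlow
      linarith [hp' (admissibleVec t - v i)]
    · intro i t' ht' t ht hdist hle
      refine (hv i).seminorm_sub_le_one hp (isAdmissible_admissibleVec ht)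
        (isAdmissible_admissibleVec ht') i.2 (fun k hk ↦ ?_) hle
      simp only [admissibleVec_apply_fin, admissibleVec_apply_fin _ ⟨k, hk⟩]
      exact (dist_le_pi_dist t' t ⟨k, hk⟩).trans (le_sub_iff_add_le'.2 hdist)
  exact ⟨admissibleVec t, isAdmissible_admissibleVec ht, heq⟩

theorem c0_renorm_infinite_equilateral_general {E : Type*} [AddCommGroup E] [Module ℝ E]
    (p : Seminorm ℝ E) (e : (ℕ →₀ ℝ) →ₗ[ℝ] E)
    (he : ∀ x, p (e x) ≤ ‖finsuppToC0 x‖ ∧ ‖finsuppToC0 x‖ ≤ 3 / 2 * p (e x)) :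
    ∃ S : Set E, S.Infinite ∧ S.Pairwise fun x y ↦ p (x - y) = 1 := by
  obtain ⟨x, -, hx⟩ := exists_seq_of_forall_fin_exists (r := fun v w ↦ (p.comp e) (w - v) = 1)
    (exists_isAdmissible_forall_eq_one (p := p.comp e) (fun x ↦ (he x).1) fun x ↦ (he x).2)
  exact ⟨range (e ∘ x),
    range_infinite_and_pairwise_of_seminorm_sub_eq_one fun m n hmn ↦ by simpa using hx m n hmn⟩

end Equilateral

/-- **Claim.** If `N` is an equivalent norm on `c₀` with `N x ≤ ‖x‖_∞ ≤ (3/2) * N x`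
for every `x`, then `(c₀, N)` admits an infinite `1`-equilateral set.
Here `c₀` is the space `C₀(ℕ, ℝ)` of real sequences vanishing at infinity, and `‖·‖`
denotes its canonical sup norm. -/
theorem c0_renorm_infinite_equilateral
    (N : C₀(ℕ, ℝ) → ℝ) (hN : IsNorm N)
    (hcomp : ∀ x : C₀(ℕ, ℝ), N x ≤ ‖x‖ ∧ ‖x‖ ≤ (3 / 2 : ℝ) * N x) :
    ∃ S : Set C₀(ℕ, ℝ), S.Infinite ∧ ∀ x ∈ S, ∀ y ∈ S, x ≠ y → N (x - y) = 1 :=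
  c0_renorm_infinite_equilateral_general hN.toSeminorm finsuppToC0 fun x => hcomp (finsuppToC0 x)
end

section
/- Let (X, ‖·‖) be a real Banach space and let S ⊆ X be a bounded and separated antipodal set with constants c₁ = 1, c₂ = c and d. Let K be the closed convex hull of (d/c)·B_X ∪ {x − y : x, y ∈ S}, where B_X is the closed unit ball. Then (d/c)·B_X ⊆ K ⊆ 2·B_X, K is the unit ball of an equivalent norm ‖·‖_K (the Minkowski functional of K), and ‖x − y‖_K = 1 for all x, y ∈ S with x ≠ y; in particular S is a 1-equilateral set in (X, ‖·‖_K). -/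
open scoped Pointwise
/-- `S` is a bounded and separated antipodal set with constants `c₁, c₂, d`. -/
def BddSepAntipodal {X : Type*} [NormedAddCommGroup X] [NormedSpace ℝ X]
    (S : Set X) (c₁ c₂ d : ℝ) : Prop :=
  (∀ x ∈ S, ‖x‖ ≤ c₁) ∧
  ∀ x ∈ S, ∀ y ∈ S, x ≠ y → ∃ f : X →L[ℝ] ℝ, ‖f‖ ≤ c₂ ∧ d ≤ f y - f x ∧
    ∀ z ∈ S, f x ≤ f z ∧ f z ≤ f y

/-!
Everything in the generating set of `K` is controlled by a functional `f` that separates two points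
`y, x` of `S`: on differences of points of `S` it is at most `f x - f y` because `f` is extremal on
`S` at `x` and `y`, and on the ball of radius `d / c` it is at most `c * (d / c) = d ≤ f x - f y`,
which is where that radius comes from. Hence `f` supports the closed convex hull `K` at `x - y`,
and `x - y` lies on the gauge unit sphere.
-/

section Gauge

variable {E : Type*} [AddCommGroup E] [Module ℝ E] {s : Set E} {x : E}

theorem isNorm_gauge [TopologicalSpace E] [T1Space E] (hs : Convex ℝ s) (hbal : Balanced ℝ s)
    (habs : Absorbent ℝ s) (hbdd : Bornology.IsVonNBounded ℝ s) : IsNorm (gauge s) :=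
  ⟨fun _ => gauge_eq_zero habs hbdd, gauge_smul hbal, gauge_add_le hs habs⟩

theorem map_le_mul_gauge {f : E →ₗ[ℝ] ℝ} {a : ℝ} (habs : Absorbent ℝ s) (ha : 0 ≤ a)
    (hf : ∀ z ∈ s, f z ≤ a) (x : E) : f x ≤ a * gauge s x := by
  have bound_of_gauge_lt : ∀ b, gauge s x < b → f x ≤ a * b := by
    intro b hb
    obtain ⟨t, ht, htb, z, hz, rfl⟩ := exists_lt_of_gauge_lt habs hb
    calc
      f (t • z) = f z * t := by rw [map_smul, smul_eq_mul, mul_comm]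
      _ ≤ a * t := by gcongr; exact hf z hz
      _ ≤ a * b := by gcongr
  exact ge_of_tendsto ((continuous_const_mul a).continuousWithinAt (s := Set.Ioi (gauge s x)))
    (eventually_nhdsWithin_of_forall bound_of_gauge_lt)

theorem gauge_eq_one_of_isMaxOn {f : E →ₗ[ℝ] ℝ} (habs : Absorbent ℝ s) (hx : x ∈ s)
    (hmax : IsMaxOn f s x) (hpos : 0 < f x) : gauge s x = 1 := by
  refine (gauge_le_one_of_mem hx).antisymm ?_
  have : f x ≤ f x * gauge s x := map_le_mul_gauge habs hpos.le (isMaxOn_iff.1 hmax) x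
  exact (le_mul_iff_one_le_right hpos).1 this

end Gauge

theorem isMaxOn_closedConvexHull {E : Type*} [AddCommGroup E] [Module ℝ E] [TopologicalSpace E]
    {f : E →L[ℝ] ℝ} {s : Set E} {x : E} (hmax : IsMaxOn f s x) :
    IsMaxOn f (closedConvexHull ℝ s) x :=
  closedConvexHull_min hmax (convex_halfSpace_le f.isLinear (f x))
    (isClosed_le f.continuous continuous_const)

section BallDifferenceHull

variable {E : Type*} [SeminormedAddCommGroup E] [NormedSpace ℝ E] {r R : ℝ} {S : Set E}
  {x y : E}

/-- The closed convex hull of the closed ball of radius `r` about the origin together with the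
difference set `S - S`; for `r = d / c` it is the body `K` whose gauge is the equilateral norm. -/
def ballDifferenceHull (r : ℝ) (S : Set E) : Set E :=
  closedConvexHull ℝ (Metric.closedBall 0 r ∪ (S - S))

namespace ballDifferenceHull

theorem eq_closure_convexHull (hr : 0 < r) (S : Set E) :
    ballDifferenceHull r S = closure (convexHull ℝ
      ((r • Metric.closedBall (0 : E) 1) ∪ {z | ∃ x ∈ S, ∃ y ∈ S, z = x - y})) := by
  have sub_eq : S - S = {z | ∃ x ∈ S, ∃ y ∈ S, z = x - y} := by
    ext z
    simp [Set.mem_sub, eq_comm]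
  rw [ballDifferenceHull, closedConvexHull_eq_closure_convexHull, smul_closedBall' hr.ne',
    smul_zero, mul_one, Real.norm_of_nonneg hr.le, sub_eq]

theorem convex : Convex ℝ (ballDifferenceHull r S) :=
  convex_closedConvexHull

theorem isClosed : IsClosed (ballDifferenceHull r S) :=
  isClosed_closedConvexHull

theorem closedBall_subset : Metric.closedBall 0 r ⊆ ballDifferenceHull r S :=
  Set.subset_union_left.trans subset_closedConvexHull

theorem sub_subset : S - S ⊆ ballDifferenceHull r S :=
  Set.subset_union_right.trans subset_closedConvexHull

theorem mem_nhds_zero (hr : 0 < r) : ballDifferenceHull r S ∈ nhds 0 :=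
  Filter.mem_of_superset (Metric.closedBall_mem_nhds 0 hr) closedBall_subset

theorem absorbent (hr : 0 < r) : Absorbent ℝ (ballDifferenceHull r S) :=
  absorbent_nhds_zero (mem_nhds_zero hr)

theorem mem_iff_gauge_le_one (hr : 0 < r) :
    x ∈ ballDifferenceHull r S ↔ gauge (ballDifferenceHull r S) x ≤ 1 := by
  rw [gauge_le_one_iff_mem_closure convex (mem_nhds_zero hr), isClosed.closure_eq]

theorem subset_closedBall (hr : r ≤ 2 * R) (hS : ∀ x ∈ S, ‖x‖ ≤ R) :
    ballDifferenceHull r S ⊆ Metric.closedBall 0 (2 * R) := by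
  refine closedConvexHull_min ?_ (convex_closedBall 0 _) Metric.isClosed_closedBall
  refine Set.union_subset (Metric.closedBall_subset_closedBall hr) ?_
  rintro _ ⟨x, hx, y, hy, rfl⟩
  rw [mem_closedBall_zero_iff, two_mul]
  exact norm_sub_le_of_le (hS x hx) (hS y hy)

theorem balanced : Balanced ℝ (ballDifferenceHull r S) := by
  have subset_neg : ballDifferenceHull r S ⊆ -ballDifferenceHull r S := by
    refine closedConvexHull_min ?_ convex.neg isClosed.neg
    rw [← Set.neg_subset, Set.union_neg, neg_closedBall, neg_zero, neg_sub]
    exact subset_closedConvexHull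
  exact (balanced_iff_neg_mem convex).2 fun _ hx => subset_neg hx

theorem isMaxOn_sub {f : E →L[ℝ] ℝ} (hx : IsMaxOn f S x) (hy : IsMinOn f S y)
    (hf : ‖f‖ * r ≤ f (x - y)) : IsMaxOn f (ballDifferenceHull r S) (x - y) := by
  refine isMaxOn_closedConvexHull (isMaxOn_iff.2 ?_)
  rintro _ (hz | ⟨u, hu, v, hv, rfl⟩)
  · exact ((le_abs_self _).trans (f.le_opNorm_of_le (mem_closedBall_zero_iff.1 hz))).trans hf
  · simpa only [map_sub] using sub_le_sub (isMaxOn_iff.1 hx u hu) (isMinOn_iff.1 hy v hv)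

end ballDifferenceHull

end BallDifferenceHull

namespace BddSepAntipodal

variable {X : Type*} [NormedAddCommGroup X] [NormedSpace ℝ X] {S : Set X} {c₁ c₂ d : ℝ} {x y : X}

theorem functional_bound_pos (h : BddSepAntipodal S c₁ c₂ d) (hS : S.Nontrivial) (hd : 0 < d) :
    0 < c₂ := by
  obtain ⟨x, hx, y, hy, hxy⟩ := hS
  obtain ⟨f, hf, hdf, -⟩ := h.2 x hx y hy hxy
  refine lt_of_lt_of_le (norm_pos_iff.2 ?_) hf
  rintro rfl
  simp only [zero_apply, sub_zero] at hdf
  exact hdf.not_gt hd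

theorem div_le_two_mul (h : BddSepAntipodal S c₁ c₂ d) (hS : S.Nontrivial) (hc : 0 < c₂) :
    d / c₂ ≤ 2 * c₁ := by
  obtain ⟨x, hx, y, hy, hxy⟩ := hS
  obtain ⟨f, hf, hdf, -⟩ := h.2 x hx y hy hxy
  have norm_sub : ‖y - x‖ ≤ 2 * c₁ := two_mul c₁ ▸ norm_sub_le_of_le (h.1 y hy) (h.1 x hx)
  rw [div_le_iff₀' hc]
  calc
    d ≤ f (y - x) := by rwa [map_sub]
    _ ≤ ‖f (y - x)‖ := le_abs_self _
    _ ≤ c₂ * (2 * c₁) := f.le_of_opNorm_le_of_le hf norm_sub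

theorem gauge_ballDifferenceHull_sub (h : BddSepAntipodal S c₁ c₂ d) (hd : 0 < d) (hx : x ∈ S)
    (hy : y ∈ S) (hxy : x ≠ y) :
    gauge (ballDifferenceHull (d / c₂) S) (x - y) = 1 := by
  have hc : 0 < c₂ := h.functional_bound_pos ⟨x, hx, y, hy, hxy⟩ hd
  obtain ⟨f, hf, hdf, hfS⟩ := h.2 y hy x hx hxy.symm
  rw [← map_sub] at hdf
  have norm_mul_le : ‖f‖ * (d / c₂) ≤ f (x - y) :=
    calc
      ‖f‖ * (d / c₂) ≤ c₂ * (d / c₂) := by gcongr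
      _ = d := mul_div_cancel₀ d hc.ne'
      _ ≤ f (x - y) := hdf
  exact gauge_eq_one_of_isMaxOn (f := (f : X →ₗ[ℝ] ℝ))
    (ballDifferenceHull.absorbent (div_pos hd hc))
    (ballDifferenceHull.sub_subset (Set.sub_mem_sub hx hy))
    (ballDifferenceHull.isMaxOn_sub (isMaxOn_iff.2 fun z hz => (hfS z hz).2)
      (isMinOn_iff.2 fun z hz => (hfS z hz).1) norm_mul_le)
    (hd.trans_le hdf)

end BddSepAntipodal

theorem antipodal_gauge_ball_general
    {X : Type*} [NormedAddCommGroup X] [NormedSpace ℝ X]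
    {S : Set X} (hS : S.Nontrivial) {c₁ c₂ d : ℝ} (hd : 0 < d)
    (hant : BddSepAntipodal S c₁ c₂ d)
    {K : Set X}
    (hK : K = closure (convexHull ℝ
      (((d / c₂) • Metric.closedBall (0 : X) 1) ∪ {z | ∃ x ∈ S, ∃ y ∈ S, z = x - y}))) :
    ((d / c₂) • Metric.closedBall (0 : X) 1 ⊆ K) ∧
    (K ⊆ (2 * c₁) • Metric.closedBall (0 : X) 1) ∧
    IsNorm (gauge K) ∧
    (∃ a b : ℝ, 0 < a ∧ 0 < b ∧ ∀ x, a * gauge K x ≤ ‖x‖ ∧ ‖x‖ ≤ b * gauge K x) ∧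
    K = {x : X | gauge K x ≤ 1} ∧
    (∀ x ∈ S, ∀ y ∈ S, x ≠ y → gauge K (x - y) = 1) := by
  have hc : 0 < c₂ := hant.functional_bound_pos hS hd
  have hr : 0 < d / c₂ := div_pos hd hc
  have hrR : d / c₂ ≤ 2 * c₁ := hant.div_le_two_mul hS hc
  have hR : 0 < 2 * c₁ := hr.trans_le hrR
  rw [← ballDifferenceHull.eq_closure_convexHull hr] at hK
  subst hK
  rw [smul_unitClosedBall_of_nonneg hr.le, smul_unitClosedBall_of_nonneg hR.le]
  have inner := ballDifferenceHull.closedBall_subset (r := d / c₂) (S := S)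
  have outer := ballDifferenceHull.subset_closedBall hrR hant.1
  have absorbent := ballDifferenceHull.absorbent (S := S) hr
  have isNorm : IsNorm (gauge (ballDifferenceHull (d / c₂) S)) :=
    isNorm_gauge ballDifferenceHull.convex ballDifferenceHull.balanced absorbent
      ((NormedSpace.isVonNBounded_closedBall ℝ X _).subset outer)
  refine ⟨inner, outer, isNorm, ⟨d / c₂, 2 * c₁, hr, hR, fun x => ⟨?lower, ?upper⟩⟩,
    Set.ext fun _ => ballDifferenceHull.mem_iff_gauge_le_one hr,
    fun x hx y hy => hant.gauge_ballDifferenceHull_sub hd hx hy⟩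
  case lower => exact mul_gauge_le_norm (Metric.ball_subset_closedBall.trans inner)
  case upper => exact (div_le_iff₀' hR).1 (le_gauge_of_subset_closedBall absorbent hR.le outer)

/-- The key construction in the proof of **Theorem 3**: for a bounded and separated
antipodal set `S` with constants `1, c, d`, the set
`K = closed convex hull of ((d/c) • B_X ∪ {x - y : x, y ∈ S})` satisfies
`(d/c) • B_X ⊆ K ⊆ 2 • B_X`, `K` is the unit ball of the equivalent norm given by its
Minkowski functional (gauge), and `gauge K (x - y) = 1` for all distinct `x, y ∈ S`,
i.e. `S` is `1`-equilateral for the gauge norm. -/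
theorem antipodal_gauge_ball
    (X : Type*) [NormedAddCommGroup X] [NormedSpace ℝ X] [CompleteSpace X]
    (S : Set X) (hS : S.Nontrivial) {c d : ℝ} (hc : 0 < c) (hd : 0 < d)
    (hant : BddSepAntipodal S 1 c d)
    (K : Set X)
    (hK : K = closure (convexHull ℝ
      (((d / c) • Metric.closedBall (0 : X) 1) ∪ {z | ∃ x ∈ S, ∃ y ∈ S, z = x - y}))) :
    ((d / c) • Metric.closedBall (0 : X) 1 ⊆ K) ∧
    (K ⊆ (2 : ℝ) • Metric.closedBall (0 : X) 1) ∧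
    IsNorm (gauge K) ∧
    (∃ a b : ℝ, 0 < a ∧ 0 < b ∧ ∀ x, a * gauge K x ≤ ‖x‖ ∧ ‖x‖ ≤ b * gauge K x) ∧
    K = {x : X | gauge K x ≤ 1} ∧
    (∀ x ∈ S, ∀ y ∈ S, x ≠ y → gauge K (x - y) = 1) := by
  simpa only [mul_one] using antipodal_gauge_ball_general hS hd hant hK
end
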